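/- Assume that P is hierarchical and that H satisfies Condition (C). Then H satisfies the MacWilliams extension property for (P, ω)-weight if and only if all of the following hold: H satisfies Condition (A); (H, P) satisfies Condition (B); (H, (P,ω)) satisfies Condition (D); and for every r ∈ [1, m] and every b ∈ ω[W_r], the product module ∏_{i ∈ W_r, ω(i)=b} H_i satisfies the MacWilliams extension property for Hamming weight. -/

import Mathlib

/-
In a hierarchical poset the weight of `α` is read off from its top level `r`: it is the total weight
of all levels below `r` plus the weight of the support of `α` in level `r`. An isometry is therefore
block triangular for the filtration by levels, and its block diagonal part preserves the
`ω`-weighted Hamming weight of every level, hence is monomial: it permutes coordinates of equal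
level and equal `ω`, and acts by an isomorphism on each. Extending suitable maps to isometries and
reading off the monomial part gives (A), (B), (D) and the Hamming extension properties; the vector
`ξ` of (C) supplies the elements to be moved.

Conversely, let `f : C → H` preserve the weight. By the UDP, on the elements of `C` of top level `r`
it induces Hamming isometries between the blocks of equal level and equal `ω`. These extend, and
glue to an isometry `Ψ` of `H` such that `Ψ⁻¹ f x - x` lives strictly below the top level of `x`.
By (B) the map `Ψ⁻¹ f - id` extends to an endomorphism `Δ` of `H` with the same property. Then `Δ`
is nilpotent, `1 + Δ` is an isometry, and `Ψ (1 + Δ)` extends `f`.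
-/

def idl {Ω : Type*} [PartialOrder Ω] (B : Set Ω) : Set Ω := {a | ∃ b ∈ B, a ≤ b}

def IsIdl {Ω : Type*} [PartialOrder Ω] (I : Set Ω) : Prop := ∀ a b : Ω, a ≤ b → b ∈ I → a ∈ I

noncomputable def lenP {Ω : Type*} [PartialOrder Ω] (y : Ω) : ℕ :=
  sSup {n : ℕ | ∃ c : Finset Ω, IsChain (· ≤ ·) (c : Set Ω) ∧ y ∈ c ∧ (∀ x ∈ c, x ≤ y) ∧ c.card = n}

def UDP {Ω : Type*} [PartialOrder Ω] (ω : Ω → ℝ) : Prop :=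
  ∀ I J : Set Ω, IsIdl I → IsIdl J → (∑ᶠ i ∈ I, ω i) = (∑ᶠ j ∈ J, ω j) →
    ∃ lam : Ω ≃o Ω, J = lam '' I ∧ ∀ i : Ω, ω (lam i) = ω i

def hsupp {Ω : Type*} {H : Ω → Type*} [∀ i, Zero (H i)] (β : ∀ i, H i) : Set Ω :=
  {i | β i ≠ 0}

noncomputable def wtw {Ω : Type*} [PartialOrder Ω] {H : Ω → Type*} [∀ i, Zero (H i)]
    (ω : Ω → ℝ) (β : ∀ i, H i) : ℝ :=
  ∑ᶠ i ∈ idl (hsupp β), ω i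

def CondA (S : Type*) [Ring S] {Ω : Type*} (H : Ω → Type*)
    [∀ i, AddCommGroup (H i)] [∀ i, Module S (H i)] : Prop :=
  ∀ i : Ω, ∀ B : Submodule S (H i), ∀ h : B →ₗ[S] H i, Function.Injective h →
    ∃ τ : H i ≃ₗ[S] H i, ∀ b : B, τ b = h b

def CondB (S : Type*) [Ring S] {Ω : Type*} [PartialOrder Ω] (H : Ω → Type*)
    [∀ i, AddCommGroup (H i)] [∀ i, Module S (H i)] : Prop :=
  ∀ k l : Ω, k ≤ l → k ≠ l →
    ∀ A : Submodule S (H l), ∀ f : A →ₗ[S] H k, ∃ g : H l →ₗ[S] H k, ∀ a : A, g a = f a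

def CondC (S : Type*) [Ring S] {Ω : Type*} (H : Ω → Type*)
    [∀ i, AddCommGroup (H i)] [∀ i, Module S (H i)] : Prop :=
  ∃ ξ : ∀ i, H i, ξ ≠ 0 ∧ ∀ k l : Ω, ∀ a : S, a • ξ k = 0 ↔ a • ξ l = 0

def CondD (S : Type*) [Ring S] {Ω : Type*} [PartialOrder Ω] (H : Ω → Type*)
    [∀ i, AddCommGroup (H i)] [∀ i, Module S (H i)] (ω : Ω → ℝ) : Prop :=
  UDP ω ∧ ∀ u v : Ω, lenP u = lenP v → ω u = ω v → Nonempty (H u ≃ₗ[S] H v)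

def MEPweight (S : Type*) [Ring S] {Ω : Type*} [PartialOrder Ω] (H : Ω → Type*)
    [∀ i, AddCommGroup (H i)] [∀ i, Module S (H i)] (ω : Ω → ℝ) : Prop :=
  ∀ C : Submodule S (∀ i, H i), ∀ f : C →ₗ[S] (∀ i, H i),
    (∀ x : C, wtw ω (f x) = wtw ω (x : ∀ i, H i)) →
    ∃ φ : (∀ i, H i) ≃ₗ[S] (∀ i, H i),
      (∀ α : ∀ i, H i, wtw ω (φ α) = wtw ω α) ∧ ∀ x : C, φ (x : ∀ i, H i) = f x

noncomputable def maxChainCard (Ω : Type*) [PartialOrder Ω] : ℕ :=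
  sSup {n : ℕ | ∃ c : Finset Ω, IsChain (· ≤ ·) (c : Set Ω) ∧ c.card = n}

def Hierarchical (Ω : Type*) [PartialOrder Ω] : Prop :=
  ∀ u v : Ω, lenP u + 1 ≤ lenP v → u ≤ v

/-- Hamming weight on a finite product of modules. -/
noncomputable def hwtPi {ι : Type*} {N : ι → Type*} [∀ j, Zero (N j)] (x : ∀ j, N j) : ℕ :=
  Set.ncard {j | x j ≠ 0}

/-- The MacWilliams extension property for Hamming weight. -/
def MEPHam (S : Type*) [Ring S] {ι : Type*} (N : ι → Type*)
    [∀ j, AddCommGroup (N j)] [∀ j, Module S (N j)] : Prop :=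
  ∀ C : Submodule S (∀ j, N j), ∀ f : C →ₗ[S] (∀ j, N j),
    (∀ x : C, hwtPi (f x) = hwtPi (x : ∀ j, N j)) →
    ∃ ψ : (∀ j, N j) ≃ₗ[S] (∀ j, N j),
      (∀ α : ∀ j, N j, hwtPi (ψ α) = hwtPi α) ∧ ∀ x : C, ψ (x : ∀ j, N j) = f x

section RelativeInjectivity

variable {S : Type*} [Ring S]

lemma exists_factor_range {M N E : Type*} [AddCommGroup M] [Module S M]
    [AddCommGroup N] [Module S N] [AddCommGroup E] [Module S E]
    {p : M →ₗ[S] N} {q : M →ₗ[S] E} (h : LinearMap.ker p ≤ LinearMap.ker q) :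
    ∃ g : LinearMap.range p →ₗ[S] E, ∀ m, g (p.rangeRestrict m) = q m := by
  refine ⟨(LinearMap.ker p).liftQ q h ∘ₗ p.quotKerEquivRange.symm.toLinearMap, fun m => ?_⟩
  have hm : p.quotKerEquivRange.symm (p.rangeRestrict m) = (LinearMap.ker p).mkQ m :=
    (LinearEquiv.symm_apply_eq _).2 rfl
  simp [hm]

/-- `E` is `M`-injective: every linear map from a submodule of `M` to `E` extends to `M`.
`CondB` says that `H k` is `H l`-injective whenever `k < l`. -/
def RelInjective (S : Type*) [Ring S] (E M : Type*) [AddCommGroup E] [Module S E]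
    [AddCommGroup M] [Module S M] : Prop :=
  ∀ A : Submodule S M, ∀ f : A →ₗ[S] E, ∃ g : M →ₗ[S] E, ∀ a : A, g a = f a

variable {E : Type*} [AddCommGroup E] [Module S E]

lemma RelInjective.exists_range_le_domain {M N : Type*} [AddCommGroup M] [Module S M]
    [AddCommGroup N] [Module S N] (h : RelInjective S E N) {j : N →ₗ[S] M}
    (hj : Function.Injective j) (F : M →ₗ.[S] E) :
    ∃ F' : M →ₗ.[S] E, F ≤ F' ∧ LinearMap.range j ≤ F'.domain := by
  obtain ⟨g, hg⟩ := h (F.domain.comap j) (F.toFun ∘ₗ j.restrict fun _ hn => hn)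
  let G : M →ₗ.[S] E :=
    ⟨LinearMap.range j, g ∘ₗ (LinearEquiv.ofInjective j hj).symm.toLinearMap⟩
  have agree : ∀ (x : F.domain) (y : G.domain), (x : M) = y → F x = G y := by
    rintro ⟨_, hx⟩ ⟨_, n, rfl⟩ rfl
    have hn : (LinearEquiv.ofInjective j hj).symm ⟨j n, n, rfl⟩ = n :=
      (LinearEquiv.symm_apply_eq _).2 rfl
    calc F ⟨j n, hx⟩ = g n := (hg ⟨n, hx⟩).symm
      _ = G ⟨j n, n, rfl⟩ := congrArg g hn.symm
  exact ⟨F.sup G agree, F.left_le_sup G agree, (F.right_le_sup G agree).1⟩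

lemma RelInjective.pi {ι : Type*} [Finite ι] {M : ι → Type*} [∀ i, AddCommGroup (M i)]
    [∀ i, Module S (M i)] (h : ∀ i, RelInjective S E (M i)) : RelInjective S E (∀ i, M i) := by
  classical
  have := Fintype.ofFinite ι
  intro A f
  have extend_to (s : Finset ι) : ∃ F : (∀ i, M i) →ₗ.[S] E, ⟨A, f⟩ ≤ F ∧
      ∀ i ∈ s, LinearMap.range (LinearMap.single S M i) ≤ F.domain := by
    induction s using Finset.induction_on with
    | empty => exact ⟨⟨A, f⟩, le_rfl, by simp⟩
    | insert i s _ ih =>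
      obtain ⟨F, hF, hs⟩ := ih
      obtain ⟨F', hF', hi⟩ := (h i).exists_range_le_domain
        (j := LinearMap.single S M i) (Pi.single_injective i) F
      refine ⟨F', hF.trans hF', fun j hj => ?_⟩
      rcases Finset.mem_insert.1 hj with rfl | hj
      · exact hi
      · exact (hs j hj).trans hF'.1
  obtain ⟨F, hF, hdom⟩ := extend_to Finset.univ
  have mem_domain (x : ∀ i, M i) : x ∈ F.domain := by
    rw [← Finset.univ_sum_single x]
    exact Submodule.sum_mem _ fun i hi => hdom i hi ⟨x i, rfl⟩
  exact ⟨F.toFun ∘ₗ LinearMap.id.codRestrict F.domain mem_domain,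
    fun a => (hF.2 (x := a) (y := ⟨a, mem_domain a⟩) rfl).symm⟩

end RelativeInjectivity

section ExtensionProperty

/-- The extension property for an arbitrary weight function `w`: `MEPweight` and
`MEPHam` are instances of it by unfolding. -/
def ExtensionProperty (S : Type*) {V R : Type*} [Ring S] [AddCommGroup V] [Module S V]
    (w : V → R) : Prop :=
  ∀ C : Submodule S V, ∀ f : C →ₗ[S] V, (∀ x : C, w (f x) = w x) →
    ∃ φ : V ≃ₗ[S] V, (∀ α, w (φ α) = w α) ∧ ∀ x : C, φ x = f x

lemma ExtensionProperty.exists_apply_eq {S V R : Type*} [Ring S] [AddCommGroup V] [Module S V]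
    {w : V → R} (h : ExtensionProperty S w)
    (hw : ∀ x, w x = w 0 → x = 0) {M : Type*} [AddCommGroup M] [Module S M]
    (p q : M →ₗ[S] V) (hpq : ∀ m, w (q m) = w (p m)) :
    ∃ φ : V ≃ₗ[S] V, (∀ α, w (φ α) = w α) ∧ ∀ m, φ (p m) = q m := by
  obtain ⟨g, hg⟩ := exists_factor_range (p := p) (q := q) fun m hm =>
    hw _ <| (hpq m).trans <| congrArg w hm
  obtain ⟨φ, hφ, hext⟩ := h (LinearMap.range p) g <| by
    rintro ⟨_, m, rfl⟩
    exact (congrArg w (hg m)).trans (hpq m)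
  exact ⟨φ, hφ, fun m => (hext (p.rangeRestrict m)).trans (hg m)⟩

end ExtensionProperty

section TotalWeight

variable {Ω : Type*} {ω : Ω → ℝ}

/-- The total weight of a set of positions, i.e. the sum occurring in `UDP` and `wtw`. -/
noncomputable def totalWeight (ω : Ω → ℝ) (A : Set Ω) : ℝ := ∑ᶠ i ∈ A, ω i

lemma totalWeight_empty : totalWeight ω ∅ = 0 := finsum_mem_empty

lemma totalWeight_singleton (i : Ω) : totalWeight ω {i} = ω i := finsum_mem_singleton

lemma totalWeight_nonneg (hω : ∀ i, 0 < ω i) (A : Set Ω) : 0 ≤ totalWeight ω A :=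
  finsum_nonneg fun i => finsum_nonneg fun _ => (hω i).le

variable [Finite Ω] {A B : Set Ω}

lemma totalWeight_union (h : Disjoint A B) :
    totalWeight ω (A ∪ B) = totalWeight ω A + totalWeight ω B :=
  finsum_mem_union h (Set.toFinite A) (Set.toFinite B)

lemma totalWeight_eq_of_fibers {κ : Type*} (f : Ω → κ)
    (h : ∀ c, totalWeight ω (A ∩ f ⁻¹' {c}) = totalWeight ω (B ∩ f ⁻¹' {c})) :
    totalWeight ω A = totalWeight ω B := by
  classical
  have := Fintype.ofFinite Ω
  have sum_fibers (A : Set Ω) :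
      totalWeight ω A = ∑ c ∈ Finset.univ.image f, totalWeight ω (A ∩ f ⁻¹' {c}) := by
    simp only [totalWeight, finsum_mem_eq_finite_toFinset_sum _ (Set.toFinite _)]
    rw [← Finset.sum_fiberwise_of_maps_to fun i _ => Finset.mem_image_of_mem f (Finset.mem_univ i)]
    exact Finset.sum_congr rfl fun c _ => Finset.sum_congr (by ext; simp) fun _ _ => rfl
  rw [sum_fibers A, sum_fibers B]
  exact Finset.sum_congr rfl fun c _ => h c

lemma totalWeight_eq_ncard_mul {b : ℝ} (hA : ∀ i ∈ A, ω i = b) :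
    totalWeight ω A = A.ncard * b := by
  rw [totalWeight, finsum_mem_congr rfl hA, finsum_mem_eq_finite_toFinset_sum _ (Set.toFinite A),
    Finset.sum_const, nsmul_eq_mul, Set.ncard_eq_toFinset_card A]

variable (hω : ∀ i, 0 < ω i)
include hω

lemma totalWeight_pos (hA : A.Nonempty) : 0 < totalWeight ω A := by
  obtain ⟨i, hi⟩ := hA
  rw [← Set.insert_sdiff_self_of_mem hi, Set.insert_eq, totalWeight_union (by simp),
    totalWeight_singleton]
  exact add_pos_of_pos_of_nonneg (hω i) (totalWeight_nonneg hω _)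

lemma totalWeight_eq_zero_iff : totalWeight ω A = 0 ↔ A = ∅ := by
  refine ⟨fun h => ?_, fun h => h ▸ totalWeight_empty⟩
  by_contra hA
  exact (totalWeight_pos hω (Set.nonempty_iff_ne_empty.2 hA)).ne' h

lemma totalWeight_lt_of_ssubset (h : A ⊂ B) : totalWeight ω A < totalWeight ω B := by
  rw [← Set.union_sdiff_cancel h.subset, totalWeight_union Set.disjoint_sdiff_right]
  exact lt_add_of_pos_right _ (totalWeight_pos hω (Set.nonempty_of_ssubset h))

lemma totalWeight_le_of_subset (h : A ⊆ B) : totalWeight ω A ≤ totalWeight ω B := by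
  rcases h.eq_or_ssubset with rfl | h
  · exact le_rfl
  · exact (totalWeight_lt_of_ssubset hω h).le

end TotalWeight

section Length

variable {Ω : Type*}

lemma bddAbove_card_of_finite [Finite Ω] (p : Finset Ω → Prop) :
    BddAbove {n : ℕ | ∃ c : Finset Ω, p c ∧ c.card = n} := by
  have := Fintype.ofFinite Ω
  exact ⟨Fintype.card Ω, by rintro n ⟨c, -, rfl⟩; exact c.card_le_univ⟩

variable [PartialOrder Ω]

lemma lenP_eq_sSup (y : Ω) : lenP y = sSup {n : ℕ | ∃ c : Finset Ω,
    (IsChain (· ≤ ·) (c : Set Ω) ∧ y ∈ c ∧ ∀ x ∈ c, x ≤ y) ∧ c.card = n} := by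
  simp only [lenP, and_assoc]

variable [Finite Ω]

lemma card_le_lenP {y : Ω} {c : Finset Ω} (hc : IsChain (· ≤ ·) (c : Set Ω)) (hy : y ∈ c)
    (hle : ∀ x ∈ c, x ≤ y) : c.card ≤ lenP y := by
  rw [lenP_eq_sSup]
  exact le_csSup (bddAbove_card_of_finite _) ⟨c, ⟨hc, hy, hle⟩, rfl⟩

lemma exists_card_eq_lenP (y : Ω) : ∃ c : Finset Ω,
    (IsChain (· ≤ ·) (c : Set Ω) ∧ y ∈ c ∧ ∀ x ∈ c, x ≤ y) ∧ c.card = lenP y := by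
  rw [lenP_eq_sSup]
  exact Nat.sSup_mem (s := {n | ∃ c : Finset Ω, _ ∧ c.card = n})
    ⟨1, {y}, by simp⟩ (bddAbove_card_of_finite _)

lemma one_le_lenP (y : Ω) : 1 ≤ lenP y :=
  card_le_lenP (c := {y}) (by simp) (by simp) (by simp)

lemma lenP_le_maxChainCard (y : Ω) : lenP y ≤ maxChainCard Ω := by
  obtain ⟨c, ⟨hc, -, -⟩, hcard⟩ := exists_card_eq_lenP y
  exact hcard ▸ le_csSup (bddAbove_card_of_finite _) ⟨c, hc, rfl⟩

lemma lenP_strictMono : StrictMono (lenP : Ω → ℕ) := by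
  classical
  intro u v huv
  obtain ⟨c, ⟨hc, -, hle⟩, hcard⟩ := exists_card_eq_lenP u
  have hv : v ∉ c := fun hv => (hle v hv).not_gt huv
  have hle' (x : Ω) (hx : x ∈ c) : x ≤ v := (hle x hx).trans huv.le
  calc lenP u < (insert v c).card := by rw [Finset.card_insert_of_notMem hv, hcard]; omega
    _ ≤ lenP v := by
      refine card_le_lenP ?_ (Finset.mem_insert_self v c) (Finset.forall_mem_insert _ _ _ |>.2
        ⟨le_rfl, hle'⟩)
      rw [Finset.coe_insert]
      exact hc.insert fun x hx _ => Or.inr (hle' x hx)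

lemma lenP_orderIso_apply (e : Ω ≃o Ω) (u : Ω) : lenP (e u) = lenP u := by
  have lenP_le (e : Ω ≃o Ω) (u : Ω) : lenP u ≤ lenP (e u) := by
    obtain ⟨c, ⟨hc, hu, hle⟩, hcard⟩ := exists_card_eq_lenP u
    rw [← hcard, ← Finset.card_map e.toEquiv.toEmbedding]
    refine card_le_lenP ?_ (Finset.mem_map_of_mem _ hu) (Finset.forall_mem_map.2 fun x hx =>
      e.monotone (hle x hx))
    rw [Finset.coe_map]
    exact e.monotone.isChain_image hc
  exact (lenP_le e.symm (e u)).trans_eq (by simp) |>.antisymm (lenP_le e u)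

lemma Hierarchical.le_iff (h : Hierarchical Ω) {u v : Ω} : u ≤ v ↔ u = v ∨ lenP u < lenP v := by
  refine ⟨fun huv => huv.eq_or_lt.imp_right fun h => lenP_strictMono h, ?_⟩
  rintro (rfl | hlt)
  · exact le_rfl
  · exact h u v hlt

end Length

section Levels

variable {Ω : Type*} [PartialOrder Ω]

lemma subset_idl (s : Set Ω) : s ⊆ idl s := fun i hi => ⟨i, hi, le_rfl⟩

lemma IsIdl.idl_eq {s : Set Ω} (hs : IsIdl s) : idl s = s :=
  (subset_idl s).antisymm' fun _ ⟨b, hb, hab⟩ => hs _ b hab hb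

variable [Finite Ω] {ω : Ω → ℝ} {s t : Set Ω} {r : ℕ}

lemma exists_subset_lenP_le (hs : s.Nonempty) :
    ∃ r, s ⊆ {i | lenP i ≤ r} ∧ (s ∩ {i | lenP i = r}).Nonempty := by
  obtain ⟨k, hk, hmax⟩ := Set.exists_max_image s lenP (Set.toFinite s) hs
  exact ⟨lenP k, hmax, k, hk, rfl⟩

variable (h : Hierarchical Ω)
include h

lemma idl_eq_union_of_subset_lenP_le (hs : s ⊆ {i | lenP i ≤ r})
    (hne : (s ∩ {i | lenP i = r}).Nonempty) :
    idl s = {i | lenP i < r} ∪ s ∩ {i | lenP i = r} := by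
  obtain ⟨k, hk, rfl⟩ := hne
  ext i
  refine ⟨?_, ?_⟩
  · rintro ⟨j, hj, hij⟩
    rcases h.le_iff.1 hij with rfl | hlt
    · exact (Nat.lt_or_eq_of_le (hs hj)).imp_right fun heq => ⟨hj, heq⟩
    · exact Or.inl (hlt.trans_le (hs hj))
  · rintro (hi | ⟨hi, -⟩)
    · exact ⟨k, hk, h.le_iff.2 (Or.inr hi)⟩
    · exact subset_idl s hi

lemma totalWeight_idl_eq_add (hs : s ⊆ {i | lenP i ≤ r})
    (hne : (s ∩ {i | lenP i = r}).Nonempty) : totalWeight ω (idl s) =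
      totalWeight ω {i | lenP i < r} + totalWeight ω (s ∩ {i | lenP i = r}) := by
  rw [idl_eq_union_of_subset_lenP_le h hs hne, totalWeight_union]
  exact Set.disjoint_left.2 fun i hi hi' => hi.ne hi'.2

variable (hω : ∀ i, 0 < ω i)
include hω

lemma totalWeight_idl_le_iff_subset_lenP_lt :
    totalWeight ω (idl s) ≤ totalWeight ω {i | lenP i < r} ↔ s ⊆ {i | lenP i < r} := by
  refine ⟨fun hle i hi => ?_, fun hs => totalWeight_le_of_subset hω ?_⟩
  · by_contra hir
    replace hir : r ≤ lenP i := not_lt.1 hir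
    refine hle.not_gt (totalWeight_lt_of_ssubset hω ⟨fun j hj => ?_, fun hsub => ?_⟩)
    · exact ⟨i, hi, h.le_iff.2 (Or.inr (lt_of_lt_of_le hj hir))⟩
    · exact (hsub (subset_idl s hi)).not_ge hir
  · rintro i ⟨j, hj, hij⟩
    exact (lenP_strictMono.monotone hij).trans_lt (hs hj)

lemma totalWeight_idl_le_iff_subset_lenP_le :
    totalWeight ω (idl s) ≤ totalWeight ω {i | lenP i ≤ r} ↔ s ⊆ {i | lenP i ≤ r} := by
  simpa only [Nat.lt_succ_iff] using totalWeight_idl_le_iff_subset_lenP_lt (r := r + 1) h hω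

lemma totalWeight_inter_level_eq (heq : totalWeight ω (idl s) = totalWeight ω (idl t))
    (hs : s ⊆ {i | lenP i ≤ r}) (ht : t ⊆ {i | lenP i ≤ r}) :
    totalWeight ω (s ∩ {i | lenP i = r}) = totalWeight ω (t ∩ {i | lenP i = r}) := by
  have empty_iff {u : Set Ω} (hu : u ⊆ {i | lenP i ≤ r}) :
      u ∩ {i | lenP i = r} = ∅ ↔ totalWeight ω (idl u) ≤ totalWeight ω {i | lenP i < r} := by
    rw [totalWeight_idl_le_iff_subset_lenP_lt h hω, ← Set.disjoint_iff_inter_eq_empty,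
      Set.disjoint_left]
    exact forall₂_congr fun i hi => ⟨(hu hi).lt_of_ne, fun hlt => hlt.ne⟩
  rcases (s ∩ {i | lenP i = r}).eq_empty_or_nonempty with hs0 | hs1
  · rw [hs0, (empty_iff ht).2 (heq ▸ (empty_iff hs).1 hs0)]
  · have ht1 : (t ∩ {i | lenP i = r}).Nonempty :=
      Set.nonempty_iff_ne_empty.2 fun ht0 =>
        hs1.ne_empty ((empty_iff hs).2 (heq.trans_le ((empty_iff ht).1 ht0)))
    rwa [totalWeight_idl_eq_add h hs hs1, totalWeight_idl_eq_add h ht ht1, add_right_inj] at heq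

lemma totalWeight_idl_eq_iff : totalWeight ω (idl s) = totalWeight ω (idl t) ↔
    ∀ r, s ⊆ {i | lenP i ≤ r} → t ⊆ {i | lenP i ≤ r} ∧
      totalWeight ω (s ∩ {i | lenP i = r}) = totalWeight ω (t ∩ {i | lenP i = r}) := by
  refine ⟨fun heq r hs => ?_, fun hst => ?_⟩
  · have ht : t ⊆ {i | lenP i ≤ r} := by
      rwa [← totalWeight_idl_le_iff_subset_lenP_le h hω, ← heq,
        totalWeight_idl_le_iff_subset_lenP_le h hω]
    exact ⟨ht, totalWeight_inter_level_eq h hω heq hs ht⟩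
  · rcases s.eq_empty_or_nonempty with rfl | hne
    · obtain ⟨ht, -⟩ := hst 0 (Set.empty_subset _)
      rw [Set.eq_empty_of_forall_notMem fun i hi =>
        (one_le_lenP i).not_gt (Nat.lt_succ_of_le (ht hi))]
    · obtain ⟨r, hs, hs1⟩ := exists_subset_lenP_le hne
      obtain ⟨ht, heq⟩ := hst r hs
      have ht1 : (t ∩ {i | lenP i = r}).Nonempty := by
        rw [Set.nonempty_iff_ne_empty, ne_eq, ← totalWeight_eq_zero_iff hω, ← heq]
        exact (totalWeight_pos hω hs1).ne'
      rw [totalWeight_idl_eq_add h hs hs1, totalWeight_idl_eq_add h ht ht1, heq]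

lemma totalWeight_idl_congr_of_subset_level (hs : s ⊆ {i | lenP i = r}) (ht : t ⊆ {i | lenP i = r})
    (heq : totalWeight ω s = totalWeight ω t) :
    totalWeight ω (idl s) = totalWeight ω (idl t) := by
  rcases s.eq_empty_or_nonempty with rfl | hne
  · rw [totalWeight_empty, eq_comm, totalWeight_eq_zero_iff hω] at heq
    rw [heq]
  · have ht1 : t.Nonempty := by
      rw [Set.nonempty_iff_ne_empty, ne_eq, ← totalWeight_eq_zero_iff hω, ← heq]
      exact (totalWeight_pos hω hne).ne'
    rw [← Set.inter_eq_left.2 hs] at hne heq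
    rw [← Set.inter_eq_left.2 ht] at ht1 heq
    rw [totalWeight_idl_eq_add h (fun i hi => (hs hi).le) hne,
      totalWeight_idl_eq_add h (fun i hi => (ht hi).le) ht1, heq]

end Levels

section Support

variable {Ω : Type*} {H : Ω → Type*} [∀ i, AddCommGroup (H i)]

lemma hsupp_subset_iff {α : ∀ i, H i} {s : Set Ω} : hsupp α ⊆ s ↔ ∀ i ∉ s, α i = 0 :=
  forall_congr' fun _ => not_imp_comm

lemma hsupp_zero : hsupp (0 : ∀ i, H i) = ∅ := Set.eq_empty_of_forall_notMem fun _ hi => hi rfl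

lemma hsupp_single_subset [DecidableEq Ω] {s : Set Ω} (i : Ω) (x : H i) (hi : i ∈ s) :
    hsupp (Pi.single i x) ⊆ s :=
  hsupp_subset_iff.2 fun _ hj => Pi.single_eq_of_ne (ne_of_mem_of_not_mem hi hj).symm x

lemma hsupp_single [DecidableEq Ω] (i : Ω) {x : H i} (hx : x ≠ 0) : hsupp (Pi.single i x) = {i} :=
  (hsupp_single_subset i x (Set.mem_singleton i)).antisymm <|
    Set.singleton_subset_iff.2 <| show Pi.single i x i ≠ 0 by rwa [Pi.single_eq_same]

lemma eq_single_of_hsupp_subset [DecidableEq Ω] {α : ∀ i, H i} {i : Ω} (h : hsupp α ⊆ {i}) :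
    α = Pi.single i (α i) := by
  ext j
  rcases eq_or_ne j i with rfl | hj
  · rw [Pi.single_eq_same]
  · rw [Pi.single_eq_of_ne hj, hsupp_subset_iff.1 h j hj]

/-- `δ` lives strictly below the top level of `α`, with respect to the level function `ℓ`. Adding
such a `δ` to `α` does not change the weight. -/
def StrictlyBelow (ℓ : Ω → ℕ) (δ α : ∀ i, H i) : Prop :=
  ∀ r, hsupp α ⊆ {i | ℓ i ≤ r} → hsupp δ ⊆ {i | ℓ i < r}

variable [Finite Ω] [PartialOrder Ω] {ω : Ω → ℝ} (hω : ∀ i, 0 < ω i)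
include hω

lemma eq_zero_of_wtw_eq_wtw_zero {α : ∀ i, H i} (hα : wtw ω α = wtw ω (0 : ∀ i, H i)) :
    α = 0 := by
  have weight_eq : totalWeight ω (idl (hsupp α)) = 0 := by
    refine hα.trans ?_
    rw [wtw, hsupp_zero, IsIdl.idl_eq (fun _ _ _ => id), finsum_mem_empty]
  have hsupp_eq : hsupp α = ∅ := Set.subset_eq_empty (subset_idl _) <|
    (totalWeight_eq_zero_iff hω).1 weight_eq
  exact funext fun i => hsupp_subset_iff.1 hsupp_eq.subset i (Set.notMem_empty i)

lemma wtw_add_eq_of_strictlyBelow (h : Hierarchical Ω) {α δ : ∀ i, H i}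
    (hδ : StrictlyBelow lenP δ α) : wtw ω (α + δ) = wtw ω α := by
  refine Eq.symm <| (totalWeight_idl_eq_iff h hω).2 fun r hα => ?_
  have add_apply_eq {i : Ω} (hi : r ≤ lenP i) : (α + δ) i = α i := by
    rw [Pi.add_apply, hsupp_subset_iff.1 (hδ r hα) i hi.not_gt, add_zero]
  refine ⟨hsupp_subset_iff.2 fun i hi => ?_, congrArg _ (Set.ext fun i => ?_)⟩
  · rw [add_apply_eq (not_le.1 hi).le, hsupp_subset_iff.1 hα i hi]
  · exact and_congr_left fun hi => not_congr <| by rw [add_apply_eq (Eq.ge hi)]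

end Support

section Monomial

variable {S ι : Type*} [Ring S] {N : ι → Type*} [∀ i, AddCommGroup (N i)] [∀ i, Module S (N i)]

lemma leftInverse_of_hsupp_apply_single_subset [DecidableEq ι] (hN : ∀ i, ∃ x : N i, x ≠ 0)
    (φ : (∀ i, N i) ≃ₗ[S] (∀ i, N i)) {σ σ' : ι → ι}
    (hσ : ∀ i x, hsupp (φ (Pi.single i x)) ⊆ {σ i})
    (hσ' : ∀ j y, hsupp (φ.symm (Pi.single j y)) ⊆ {σ' j}) : Function.LeftInverse σ' σ := by
  intro i
  obtain ⟨x, hx⟩ := hN i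
  have hsub : hsupp (Pi.single i x) ⊆ {σ' (σ i)} := by
    rw [← φ.symm_apply_apply (Pi.single i x), eq_single_of_hsupp_subset (hσ i x)]
    exact hσ' _ _
  rw [hsupp_single i hx] at hsub
  exact (hsub rfl).symm

lemma bijective_apply_single [DecidableEq ι] {φ : (∀ i, N i) ≃ₗ[S] (∀ i, N i)} {i j : ι}
    (hφ : ∀ x, hsupp (φ (Pi.single i x)) ⊆ {j}) (hφ' : ∀ y, hsupp (φ.symm (Pi.single j y)) ⊆ {i}) :
    Function.Bijective (.proj j ∘ₗ φ.toLinearMap ∘ₗ .single S N i : N i →ₗ[S] N j) := by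
  refine ⟨(injective_iff_map_eq_zero _).2 fun x hx => ?_, fun y => ?_⟩
  · have apply_eq_zero : φ (Pi.single i x) = 0 := by
      rw [eq_single_of_hsupp_subset (hφ x)]
      exact (congrArg (Pi.single j) hx).trans (Pi.single_zero j)
    exact Pi.single_eq_zero_iff.1 (φ.map_eq_zero_iff.1 apply_eq_zero)
  · refine ⟨φ.symm (Pi.single j y) i, ?_⟩
    change φ (Pi.single i (φ.symm (Pi.single j y) i)) j = y
    rw [← eq_single_of_hsupp_subset (hφ' y), φ.apply_symm_apply, Pi.single_eq_same]

variable [Finite ι]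

lemma apply_eq_apply_single [DecidableEq ι] {φ : (∀ i, N i) ≃ₗ[S] (∀ i, N i)} {σ : ι → ι}
    (hσ_inj : Function.Injective σ) (hσ : ∀ i x, hsupp (φ (Pi.single i x)) ⊆ {σ i})
    (α : ∀ i, N i) (i : ι) : φ α (σ i) = φ (Pi.single i (α i)) (σ i) := by
  have := Fintype.ofFinite ι
  conv_lhs => rw [← Finset.univ_sum_single α, map_sum, Finset.sum_apply]
  exact Finset.sum_eq_single i
    (fun k _ hki => hsupp_subset_iff.1 (hσ k _) _ fun h => hki (hσ_inj h).symm)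
    fun hi => absurd (Finset.mem_univ i) hi

variable {ω : ι → ℝ} (hω : ∀ i, 0 < ω i) {φ : (∀ i, N i) ≃ₗ[S] (∀ i, N i)}
  (hφ : ∀ α, totalWeight ω (hsupp (φ α)) = totalWeight ω (hsupp α))
include hω hφ

lemma exists_hsupp_apply_single_subset [DecidableEq ι] (i : ι) (x : N i) :
    ∃ j, hsupp (φ (Pi.single i x)) ⊆ {j} := by
  set y := φ (Pi.single i x) with hy
  by_contra! hne
  have symm_apply_eq_zero (β : ∀ i, N i) (hβ : hsupp β ⊂ hsupp y) : φ.symm β i = 0 := by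
    by_contra hi
    refine (totalWeight_lt_of_ssubset hω hβ).not_ge ?_
    calc totalWeight ω (hsupp y) = totalWeight ω (hsupp (Pi.single i x)) := hφ _
      _ ≤ totalWeight ω (hsupp (φ.symm β)) :=
        totalWeight_le_of_subset hω (hsupp_single_subset i x hi)
      _ = totalWeight ω (hsupp β) := by rw [← hφ, φ.apply_symm_apply]
  obtain ⟨j, hj, -⟩ := Set.not_subset.1 (hne i)
  have single_ssubset : hsupp (Pi.single j (y j)) ⊂ hsupp y := by
    rw [hsupp_single j hj]
    exact ⟨Set.singleton_subset_iff.2 hj, hne j⟩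
  have sub_ssubset : hsupp (y - Pi.single j (y j)) ⊂ hsupp y := by
    refine ⟨hsupp_subset_iff.2 fun k hk => ?_, fun hsub => hsub hj ?_⟩
    · rw [Pi.sub_apply, Pi.single_eq_of_ne (ne_of_mem_of_not_mem hj hk).symm, sub_zero]
      exact not_not.1 hk
    · rw [Pi.sub_apply, Pi.single_eq_same, sub_self]
  have x_eq_zero : x = 0 :=
    calc x = φ.symm (Pi.single j (y j) + (y - Pi.single j (y j))) i := by
          rw [add_sub_cancel, hy, φ.symm_apply_apply, Pi.single_eq_same]
      _ = 0 := by
        rw [map_add, Pi.add_apply, symm_apply_eq_zero _ single_ssubset,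
          symm_apply_eq_zero _ sub_ssubset, add_zero]
  exact hj (by rw [hy, x_eq_zero, Pi.single_zero, map_zero, Pi.zero_apply])

lemma exists_forall_hsupp_apply_single_subset [DecidableEq ι] (i : ι) :
    ∃ j, ∀ x : N i, hsupp (φ (Pi.single i x)) ⊆ {j} := by
  by_cases hx : ∃ x : N i, (hsupp (φ (Pi.single i x))).Nonempty
  · obtain ⟨x, j, hj⟩ := hx
    refine ⟨j, fun y l hl => by_contra fun hlj : l ≠ j => ?_⟩
    obtain ⟨a, hx⟩ := exists_hsupp_apply_single_subset hω hφ i x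
    obtain ⟨b, hy⟩ := exists_hsupp_apply_single_subset hω hφ i y
    obtain ⟨c, hxy⟩ := exists_hsupp_apply_single_subset hω hφ i (x + y)
    have hxl : φ (Pi.single i x) l = 0 :=
      hsupp_subset_iff.1 hx l fun hla => hlj (hla.trans (hx hj).symm)
    have hyj : φ (Pi.single i y) j = 0 :=
      hsupp_subset_iff.1 hy j fun hjb => hlj ((hy hl).trans hjb.symm)
    have hl' : l ∈ hsupp (φ (Pi.single i (x + y))) := by
      rwa [hsupp, Set.mem_ofPred_eq, Pi.single_add, map_add, Pi.add_apply, hxl, zero_add]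
    have hj' : j ∈ hsupp (φ (Pi.single i (x + y))) := by
      rwa [hsupp, Set.mem_ofPred_eq, Pi.single_add, map_add, Pi.add_apply, hyj, add_zero]
    exact hlj ((hxy hl').trans (hxy hj').symm)
  · push Not at hx
    exact ⟨i, fun x => (hx x).subset.trans (Set.empty_subset _)⟩

lemma exists_perm_apply_eq (hN : ∀ i, ∃ x : N i, x ≠ 0) :
    ∃ (σ : Equiv.Perm ι) (τ : ∀ i, N i ≃ₗ[S] N (σ i)),
      (∀ i, ω (σ i) = ω i) ∧ ∀ α i, φ α (σ i) = τ i (α i) := by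
  classical
  have hφ' (α) : totalWeight ω (hsupp (φ.symm α)) = totalWeight ω (hsupp α) := by
    rw [← hφ, φ.apply_symm_apply]
  choose σ hσ using exists_forall_hsupp_apply_single_subset hω hφ
  choose σ' hσ' using exists_forall_hsupp_apply_single_subset hω hφ'
  let e : Equiv.Perm ι :=
    ⟨σ, σ', leftInverse_of_hsupp_apply_single_subset hN φ hσ hσ',
      leftInverse_of_hsupp_apply_single_subset hN φ.symm hσ' hσ⟩
  let τ (i) : N i ≃ₗ[S] N (e i) :=
    .ofBijective (.proj (e i) ∘ₗ φ.toLinearMap ∘ₗ .single S N i)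
      (bijective_apply_single (hσ i) fun y =>
        (hσ' (e i) y).trans (Set.singleton_subset_singleton.2 (e.symm_apply_apply i)))
  refine ⟨e, τ, fun i => ?_, fun α i => apply_eq_apply_single e.injective hσ α i⟩
  obtain ⟨x, hx⟩ := hN i
  have apply_ne_zero : φ (Pi.single i x) (e i) ≠ 0 := (map_ne_zero_iff (τ i) (τ i).injective).2 hx
  have := hφ (Pi.single i x)
  rwa [(hσ i x).antisymm (Set.singleton_subset_iff.2 apply_ne_zero), hsupp_single i hx,
    totalWeight_singleton, totalWeight_singleton] at this

end Monomial

section LevelDiagonal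

variable {S ι : Type*} [Ring S] {H : ι → Type*} [∀ i, AddCommGroup (H i)] [∀ i, Module S (H i)]

variable (S H) in
open Classical in
/-- The projection of `∀ i, H i` onto the coordinates in `s`, as an endomorphism. -/
noncomputable def coordProj (s : Set ι) : (∀ i, H i) →ₗ[S] ∀ i, H i :=
  LinearMap.pi fun i => if i ∈ s then LinearMap.proj i else 0

lemma coordProj_apply_of_mem {s : Set ι} {i : ι} (hi : i ∈ s) (α : ∀ i, H i) :
    coordProj S H s α i = α i := by
  simp [coordProj, hi]

lemma coordProj_apply_of_notMem {s : Set ι} {i : ι} (hi : i ∉ s) (α : ∀ i, H i) :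
    coordProj S H s α i = 0 := by
  simp [coordProj, hi]

lemma hsupp_coordProj (s : Set ι) (α : ∀ i, H i) : hsupp (coordProj S H s α) = hsupp α ∩ s := by
  ext i
  by_cases hi : i ∈ s <;> simp [hsupp, coordProj, hi]

/-- `φ` preserves the filtration of `∀ i, H i` by the levels of `ℓ`, i.e. it is block triangular. -/
def LevelTriangular (ℓ : ι → ℕ) (φ : (∀ i, H i) →ₗ[S] ∀ i, H i) : Prop :=
  ∀ (r : ℕ) (α : ∀ i, H i), hsupp α ⊆ {i | ℓ i < r} → hsupp (φ α) ⊆ {i | ℓ i < r}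

lemma LevelTriangular.hsupp_subset_le {ℓ : ι → ℕ} {φ : (∀ i, H i) →ₗ[S] ∀ i, H i}
    (hφ : LevelTriangular ℓ φ) {r : ℕ} {α : ∀ i, H i} (hα : hsupp α ⊆ {i | ℓ i ≤ r}) :
    hsupp (φ α) ⊆ {i | ℓ i ≤ r} := by
  simp only [← Nat.lt_succ_iff] at hα ⊢
  exact hφ _ α hα

/-- The block diagonal part of `φ` with respect to the levels of `ℓ`. -/
noncomputable def levelDiag (ℓ : ι → ℕ) (φ : (∀ i, H i) →ₗ[S] ∀ i, H i) :
    (∀ i, H i) →ₗ[S] ∀ i, H i :=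
  LinearMap.pi fun j => LinearMap.proj j ∘ₗ φ ∘ₗ coordProj S H {i | ℓ i = ℓ j}

variable {ℓ : ι → ℕ} {φ ψ : (∀ i, H i) →ₗ[S] ∀ i, H i}

lemma levelDiag_apply (ℓ : ι → ℕ) (φ : (∀ i, H i) →ₗ[S] ∀ i, H i) (α : ∀ i, H i) (j : ι) :
    levelDiag ℓ φ α j = φ (coordProj S H {i | ℓ i = ℓ j} α) j := rfl

lemma LevelTriangular.levelDiag_apply_eq (hφ : LevelTriangular ℓ φ) {α : ∀ i, H i} {j : ι}
    (hα : hsupp α ⊆ {i | ℓ i ≤ ℓ j}) : levelDiag ℓ φ α j = φ α j := by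
  have lower : hsupp (α - coordProj S H {i | ℓ i = ℓ j} α) ⊆ {i | ℓ i < ℓ j} := by
    refine hsupp_subset_iff.2 fun i hi => ?_
    rcases (not_lt.1 (show ¬ℓ i < ℓ j from hi)).eq_or_lt with heq | hlt
    · rw [Pi.sub_apply, coordProj_apply_of_mem (s := {i | ℓ i = ℓ j}) heq.symm, sub_self]
    · rw [Pi.sub_apply, coordProj_apply_of_notMem (s := {i | ℓ i = ℓ j}) hlt.ne',
        sub_zero, hsupp_subset_iff.1 hα i hlt.not_ge]
  have := hsupp_subset_iff.1 (hφ _ _ lower) j (lt_irrefl (ℓ j))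
  rw [map_sub, Pi.sub_apply, sub_eq_zero] at this
  exact this.symm

lemma levelDiag_comp (hφ : LevelTriangular ℓ φ) (hψ : LevelTriangular ℓ ψ) :
    levelDiag ℓ (ψ ∘ₗ φ) = levelDiag ℓ ψ ∘ₗ levelDiag ℓ φ := by
  refine LinearMap.ext fun α => funext fun j => ?_
  set β := coordProj S H {i | ℓ i = ℓ j} α
  have level_eq : coordProj S H {i | ℓ i = ℓ j} (levelDiag ℓ φ α) =
      coordProj S H {i | ℓ i = ℓ j} (φ β) := by
    ext i
    by_cases hi : i ∈ {i | ℓ i = ℓ j}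
    · rw [coordProj_apply_of_mem hi, coordProj_apply_of_mem hi, levelDiag_apply,
        show ℓ i = ℓ j from hi]
    · rw [coordProj_apply_of_notMem hi, coordProj_apply_of_notMem hi]
  have hβ : hsupp β ⊆ {i | ℓ i ≤ ℓ j} := by
    rw [hsupp_coordProj]
    exact fun i hi => hi.2.le
  calc levelDiag ℓ (ψ ∘ₗ φ) α j = ψ (φ β) j := rfl
    _ = levelDiag ℓ ψ (φ β) j := (hψ.levelDiag_apply_eq (hφ.hsupp_subset_le hβ)).symm
    _ = levelDiag ℓ ψ (levelDiag ℓ φ α) j := by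
      rw [levelDiag_apply, levelDiag_apply ℓ ψ (levelDiag ℓ φ α), level_eq]

lemma levelDiag_id : levelDiag ℓ (LinearMap.id : (∀ i, H i) →ₗ[S] ∀ i, H i) = LinearMap.id :=
  LinearMap.ext fun α => funext fun j => coordProj_apply_of_mem (by exact rfl) α

/-- The block diagonal part of an automorphism which is block triangular together with its
inverse. -/
noncomputable def levelDiagEquiv (ℓ : ι → ℕ) (φ : (∀ i, H i) ≃ₗ[S] ∀ i, H i)
    (hφ : LevelTriangular ℓ φ.toLinearMap) (hφ' : LevelTriangular ℓ φ.symm.toLinearMap) :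
    (∀ i, H i) ≃ₗ[S] ∀ i, H i :=
  .ofLinearMap (levelDiag ℓ φ.toLinearMap) (levelDiag ℓ φ.symm.toLinearMap)
    (by rw [← levelDiag_comp hφ' hφ, φ.comp_symm, levelDiag_id])
    (by rw [← levelDiag_comp hφ hφ', φ.symm_comp, levelDiag_id])

end LevelDiagonal

section Isometry

variable {S Ω : Type*} [Ring S] {H : Ω → Type*} [∀ i, AddCommGroup (H i)] [∀ i, Module S (H i)]
  [Finite Ω] [PartialOrder Ω] {ω : Ω → ℝ} (h : Hierarchical Ω) (hω : ∀ i, 0 < ω i)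
include h hω

lemma levelTriangular_of_wtw_eq {φ : (∀ i, H i) →ₗ[S] ∀ i, H i}
    (hφ : ∀ α, wtw ω (φ α) = wtw ω α) : LevelTriangular lenP φ := fun r α hα => by
  rw [← totalWeight_idl_le_iff_subset_lenP_lt h hω] at hα ⊢
  exact (hφ α).trans_le hα

lemma totalWeight_hsupp_levelDiag {φ : (∀ i, H i) →ₗ[S] ∀ i, H i}
    (hφ : ∀ α, wtw ω (φ α) = wtw ω α) (α : ∀ i, H i) :
    totalWeight ω (hsupp (levelDiag lenP φ α)) = totalWeight ω (hsupp α) := by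
  refine totalWeight_eq_of_fibers lenP fun r => ?_
  set β := coordProj S H {i | lenP i = r} α with hβ
  have hβ_sub : hsupp β ⊆ {i | lenP i ≤ r} := by
    rw [hsupp_coordProj]
    exact fun i hi => hi.2.le
  have hφβ := ((totalWeight_idl_eq_iff h hω).1 (hφ β).symm r hβ_sub).2
  calc totalWeight ω (hsupp (levelDiag lenP φ α) ∩ {i | lenP i = r})
      = totalWeight ω (hsupp (φ β) ∩ {i | lenP i = r}) := by
        refine congrArg _ (Set.ext fun i => and_congr_left fun hi => ?_)
        simp only [hsupp, Set.mem_ofPred_eq, levelDiag_apply, show lenP i = r from hi, hβ]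
    _ = totalWeight ω (hsupp β ∩ {i | lenP i = r}) := hφβ.symm
    _ = totalWeight ω (hsupp α ∩ {i | lenP i = r}) := by
      rw [hsupp_coordProj, Set.inter_assoc, Set.inter_self]

lemma exists_perm_of_wtw_eq (hH : ∀ i, ∃ x : H i, x ≠ 0) {φ : (∀ i, H i) ≃ₗ[S] ∀ i, H i}
    (hφ : ∀ α, wtw ω (φ α) = wtw ω α) :
    ∃ (σ : Equiv.Perm Ω) (τ : ∀ i, H i ≃ₗ[S] H (σ i)),
      (∀ i, lenP (σ i) = lenP i) ∧ (∀ i, ω (σ i) = ω i) ∧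
        ∀ i α, hsupp α ⊆ {k | lenP k ≤ lenP i} → φ α (σ i) = τ i (α i) := by
  classical
  have hφ' (α) : wtw ω (φ.symm α) = wtw ω α := by rw [← hφ, φ.apply_symm_apply]
  have htri := levelTriangular_of_wtw_eq (φ := φ.toLinearMap) h hω hφ
  obtain ⟨σ, τ, hσω, hστ⟩ := exists_perm_apply_eq (φ := levelDiagEquiv lenP φ htri
    (levelTriangular_of_wtw_eq h hω hφ')) hω (totalWeight_hsupp_levelDiag h hω hφ) hH
  have hσ (i) : lenP (σ i) = lenP i := by
    obtain ⟨x, hx⟩ := hH i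
    by_contra hne
    have coordProj_eq_zero : coordProj S H {k | lenP k = lenP (σ i)} (Pi.single i x) = 0 := by
      ext k
      by_cases hk : k ∈ {k | lenP k = lenP (σ i)}
      · rw [coordProj_apply_of_mem hk, Pi.single_eq_of_ne (by rintro rfl; exact hne hk.symm),
          Pi.zero_apply]
      · rw [coordProj_apply_of_notMem hk, Pi.zero_apply]
    refine hx ((τ i).map_eq_zero_iff.1 ?_)
    calc τ i x = levelDiag lenP φ.toLinearMap (Pi.single i x) (σ i) := by
          rw [← Pi.single_eq_same i x, ← hστ, Pi.single_eq_same]; rfl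
      _ = 0 := by rw [levelDiag_apply, coordProj_eq_zero, map_zero, Pi.zero_apply]
  refine ⟨σ, τ, hσ, hσω, fun i α hα => ?_⟩
  exact (htri.levelDiag_apply_eq (by rwa [hσ])).symm.trans (hστ α i)

end Isometry

section Necessity

variable {S Ω : Type*} [Ring S] {H : Ω → Type*} [∀ i, AddCommGroup (H i)] [∀ i, Module S (H i)]
  [Finite Ω] [PartialOrder Ω] {ω : Ω → ℝ}

lemma MEPweight.exists_apply_eq (hM : MEPweight S H ω) (hω : ∀ i, 0 < ω i) {M : Type*}
    [AddCommGroup M] [Module S M] (p q : M →ₗ[S] ∀ i, H i)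
    (hpq : ∀ m, wtw ω (q m) = wtw ω (p m)) :
    ∃ φ : (∀ i, H i) ≃ₗ[S] ∀ i, H i, (∀ α, wtw ω (φ α) = wtw ω α) ∧ ∀ m, φ (p m) = q m :=
  ExtensionProperty.exists_apply_eq hM (fun _ => eq_zero_of_wtw_eq_wtw_zero hω) p q hpq

lemma MEPweight.exists_apply_eq_of_smul (hM : MEPweight S H ω) (hω : ∀ i, 0 < ω i)
    {α β : ∀ i, H i} (hαβ : ∀ s : S, wtw ω (s • β) = wtw ω (s • α)) :
    ∃ φ : (∀ i, H i) ≃ₗ[S] ∀ i, H i, (∀ γ, wtw ω (φ γ) = wtw ω γ) ∧ φ α = β := by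
  obtain ⟨φ, hφ, hext⟩ := hM.exists_apply_eq hω (LinearMap.toSpanSingleton S _ α)
    (LinearMap.toSpanSingleton S _ β) hαβ
  exact ⟨φ, hφ, by simpa using hext 1⟩

lemma MEPweight.condB (hM : MEPweight S H ω) (hω : ∀ i, 0 < ω i) (h : Hierarchical Ω) :
    CondB S H := by
  classical
  intro k l hkl hne A f
  have hlt : lenP k < lenP l := lenP_strictMono (hkl.lt_of_ne hne)
  obtain ⟨φ, -, hφ⟩ := hM.exists_apply_eq hω (LinearMap.single S H l ∘ₗ A.subtype)
    (LinearMap.single S H l ∘ₗ A.subtype + LinearMap.single S H k ∘ₗ f) <| by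
      refine fun a => wtw_add_eq_of_strictlyBelow hω h fun r hr => ?_
      rcases eq_or_ne a 0 with rfl | ha
      · simp [hsupp_zero]
      · have hlr : lenP l ≤ r :=
          hr (show l ∈ hsupp (Pi.single l a.1) by rw [hsupp_single l (by simpa using ha)]; rfl)
        exact hsupp_single_subset k (f a) (hlt.trans_le hlr)
  refine ⟨.proj k ∘ₗ φ.toLinearMap ∘ₗ .single S H l, fun a => ?_⟩
  simpa [hne] using congrFun (hφ a) k

lemma exists_equiv_of_apply_single_eq_single [DecidableEq Ω] (hω : ∀ i, 0 < ω i)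
    (h : Hierarchical Ω) (hH : ∀ i, ∃ x : H i, x ≠ 0) {φ : (∀ i, H i) ≃ₗ[S] ∀ i, H i}
    (hφ : ∀ α, wtw ω (φ α) = wtw ω α) {i j : Ω} {x : H i} {y : H j} (hx : x ≠ 0)
    (hxy : φ (Pi.single i x) = Pi.single j y) :
    ∃ τ : H i ≃ₗ[S] H j, ∀ z : H i, φ (Pi.single i z) j = τ z := by
  obtain ⟨σ, τ, -, -, hστ⟩ := exists_perm_of_wtw_eq h hω hH hφ
  have apply_single (z : H i) : φ (Pi.single i z) (σ i) = τ i z := by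
    rw [hστ i _ (hsupp_single_subset i z (le_refl (lenP i))),
      Pi.single_eq_same]
  obtain rfl : σ i = j := by
    by_contra hne
    refine hx ((τ i).map_eq_zero_iff.1 ?_)
    rw [← apply_single, hxy, Pi.single_eq_of_ne hne]
  exact ⟨τ i, apply_single⟩

lemma MEPweight.condA (hM : MEPweight S H ω) (hω : ∀ i, 0 < ω i) (h : Hierarchical Ω)
    (hH : ∀ i, ∃ x : H i, x ≠ 0) : CondA S H := by
  classical
  intro i B g hg
  by_cases hB : ∃ b : B, b ≠ 0
  · obtain ⟨b, hb⟩ := hB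
    obtain ⟨φ, hφ, hext⟩ := hM.exists_apply_eq hω (LinearMap.single S H i ∘ₗ B.subtype)
      (LinearMap.single S H i ∘ₗ g) <| by
        intro c
        rcases eq_or_ne c 0 with rfl | hc
        · simp
        · have hgc : g c ≠ 0 := (map_ne_zero_iff g hg).2 hc
          have hc' : (c : H i) ≠ 0 := by simpa using hc
          exact congrArg (totalWeight ω <| idl ·)
            ((hsupp_single i hgc).trans (hsupp_single i hc').symm)
    obtain ⟨τ, hτ⟩ := exists_equiv_of_apply_single_eq_single hω h hH hφ
      (x := (b : H i)) (by simpa using hb) (hext b)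
    refine ⟨τ, fun c => ?_⟩
    rw [← hτ]
    exact (congrFun (hext c) i).trans (Pi.single_eq_same i (g c))
  · push Not at hB
    exact ⟨LinearEquiv.refl S _, fun b => by simp [hB b]⟩

lemma MEPweight.nonempty_equiv (hM : MEPweight S H ω) (hω : ∀ i, 0 < ω i) (h : Hierarchical Ω)
    {ξ : ∀ i, H i} (hξ : ∀ i, ξ i ≠ 0) (hann : ∀ k l, ∀ a : S, a • ξ k = 0 ↔ a • ξ l = 0)
    {u v : Ω} (hlen : lenP u = lenP v) (huv : ω u = ω v) : Nonempty (H u ≃ₗ[S] H v) := by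
  classical
  obtain ⟨φ, hφ, hext⟩ := hM.exists_apply_eq_of_smul hω (α := Pi.single u (ξ u))
    (β := Pi.single v (ξ v)) <| by
      intro s
      rw [← Pi.single_smul, ← Pi.single_smul]
      by_cases hs : s • ξ u = 0
      · rw [hs, (hann u v s).1 hs, Pi.single_zero, Pi.single_zero]
      · refine totalWeight_idl_congr_of_subset_level (r := lenP u) h hω
          (hsupp_single_subset v _ hlen.symm) (hsupp_single_subset u _ rfl) ?_
        rw [hsupp_single u hs, hsupp_single v (mt (hann u v s).2 hs), totalWeight_singleton,
          totalWeight_singleton, huv]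
  obtain ⟨τ, -⟩ := exists_equiv_of_apply_single_eq_single hω h (fun i => ⟨ξ i, hξ i⟩) hφ (hξ u) hext
  exact ⟨τ⟩

lemma exists_orderIso_of_wtw_eq (hω : ∀ i, 0 < ω i) (h : Hierarchical Ω)
    (hH : ∀ i, ∃ x : H i, x ≠ 0) {φ : (∀ i, H i) ≃ₗ[S] ∀ i, H i}
    (hφ : ∀ α, wtw ω (φ α) = wtw ω α) {α : ∀ i, H i} (hα : IsIdl (hsupp α))
    (hφα : IsIdl (hsupp (φ α))) :
    ∃ lam : Ω ≃o Ω, hsupp (φ α) = lam '' hsupp α ∧ ∀ i, ω (lam i) = ω i := by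
  obtain ⟨σ, τ, hlen, hσω, hστ⟩ := exists_perm_of_wtw_eq h hω hH hφ
  have mem_of_higher {s : Set Ω} (hs : IsIdl s) {i : Ω} (hi : ¬s ⊆ {k | lenP k ≤ lenP i}) :
      i ∈ s := by
    obtain ⟨k, hk, hik⟩ := Set.not_subset.1 hi
    exact hs i k (h.le_iff.2 (Or.inr (not_le.1 hik))) hk
  have mem_iff (i : Ω) : σ i ∈ hsupp (φ α) ↔ i ∈ hsupp α := by
    by_cases hi : hsupp α ⊆ {k | lenP k ≤ lenP i}
    · exact (hστ i α hi ▸ (τ i).map_ne_zero_iff : φ α (σ i) ≠ 0 ↔ α i ≠ 0)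
    · refine iff_of_true (mem_of_higher hφα fun hi' => hi ?_) (mem_of_higher hα hi)
      exact ((totalWeight_idl_eq_iff h hω).1 (hφ α) _ (by rwa [hlen] at hi')).1
  refine ⟨⟨σ, fun {a b} => ?_⟩, Set.ext fun j => ?_, hσω⟩
  · rw [h.le_iff, h.le_iff, hlen, hlen, σ.apply_eq_iff_eq]
  · exact ⟨fun hj => ⟨σ.symm j, (mem_iff _).1 (by rwa [σ.apply_symm_apply]), σ.apply_symm_apply j⟩,
      by rintro ⟨i, hi, rfl⟩; exact (mem_iff i).2 hi⟩

lemma MEPweight.udp (hM : MEPweight S H ω) (hω : ∀ i, 0 < ω i) (h : Hierarchical Ω)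
    {ξ : ∀ i, H i} (hξ : ∀ i, ξ i ≠ 0) (hann : ∀ k l, ∀ a : S, a • ξ k = 0 ↔ a • ξ l = 0) :
    UDP ω := by
  intro I J hI hJ hIJ
  have hsupp_smul {s : S} (hs : ∀ i, s • ξ i ≠ 0) (A : Set Ω) :
      hsupp (s • coordProj S H A ξ) = A := by
    rw [← map_smul, hsupp_coordProj]
    exact Set.inter_eq_right.2 fun i _ => hs i
  have hsupp_eq (A : Set Ω) : hsupp (coordProj S H A ξ) = A := by
    simpa using hsupp_smul (s := 1) (by simpa using hξ) A
  obtain ⟨φ, hφ, hext⟩ := hM.exists_apply_eq_of_smul hω (α := coordProj S H I ξ)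
    (β := coordProj S H J ξ) <| by
      intro s
      by_cases hs : ∀ i, s • ξ i = 0
      · rw [← map_smul, ← map_smul, show s • ξ = 0 from funext hs, map_zero, map_zero]
      · obtain ⟨k, hk⟩ := not_forall.1 hs
        have hs' (i) : s • ξ i ≠ 0 := mt (hann i k s).1 hk
        change totalWeight ω (idl _) = totalWeight ω (idl _)
        rw [hsupp_smul hs', hsupp_smul hs', hI.idl_eq, hJ.idl_eq]
        exact hIJ.symm
  obtain ⟨lam, hlam, hωlam⟩ := exists_orderIso_of_wtw_eq hω h (fun i => ⟨ξ i, hξ i⟩) hφ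
    (α := coordProj S H I ξ) (by rwa [hsupp_eq]) (by rwa [hext, hsupp_eq])
  rw [hext, hsupp_eq, hsupp_eq] at hlam
  exact ⟨lam, hlam, hωlam⟩

end Necessity

section HammingNecessity

lemma exists_equiv_apply_perm {S κ : Type*} [Ring S] {N : κ → Type*} [∀ k, AddCommGroup (N k)]
    [∀ k, Module S (N k)] (e : Equiv.Perm κ) (τ : ∀ k, N k ≃ₗ[S] N (e k)) :
    ∃ ψ : (∀ k, N k) ≃ₗ[S] ∀ k, N k,
      (∀ x, hwtPi (ψ x) = hwtPi x) ∧ ∀ x k, ψ x (e k) = τ k (x k) := by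
  let ψ := (LinearEquiv.piCongrRight τ).trans (LinearEquiv.piCongrLeft S N e)
  have ψ_apply (x : ∀ k, N k) (k : κ) : ψ x (e k) = τ k (x k) :=
    Equiv.piCongrLeft_apply_apply N e (fun k => τ k (x k)) k
  refine ⟨ψ, fun x => ?_, ψ_apply⟩
  have image_eq : e '' {k | x k ≠ 0} = {j | ψ x j ≠ 0} := by
    ext j
    obtain ⟨k, rfl⟩ := e.surjective j
    rw [e.injective.mem_set_image, Set.mem_ofPred_eq, Set.mem_ofPred_eq, ψ_apply,
      (τ k).map_ne_zero_iff]
  rw [hwtPi, hwtPi, ← image_eq, Set.ncard_image_of_injective _ e.injective]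

variable {S Ω : Type*} [Ring S] {H : Ω → Type*} [∀ i, AddCommGroup (H i)] [∀ i, Module S (H i)]

variable (S H) in
open Classical in
/-- Extension by zero from the positions satisfying `p` to all positions. -/
noncomputable def extendZero (p : Ω → Prop) : (∀ k : {i // p i}, H k) →ₗ[S] ∀ i, H i :=
  LinearMap.pi fun i => if hi : p i then
    LinearMap.proj (φ := fun k : {i // p i} => H k) ⟨i, hi⟩ else 0

lemma extendZero_apply {p : Ω → Prop} (x : ∀ k : {i // p i}, H k) (k : {i // p i}) :
    extendZero S H p x k = x k := by
  simp [extendZero, k.2]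

lemma hsupp_extendZero {p : Ω → Prop} (x : ∀ k : {i // p i}, H k) :
    hsupp (extendZero S H p x) = Subtype.val '' {k | x k ≠ 0} := by
  ext i
  by_cases hi : p i <;> simp [hsupp, extendZero, hi]

variable [Finite Ω] [PartialOrder Ω] {ω : Ω → ℝ}

lemma wtw_extendZero_eq (hω : ∀ i, 0 < ω i) (h : Hierarchical Ω) {r : ℕ} {b : ℝ}
    {x y : ∀ k : {i // lenP i = r ∧ ω i = b}, H k} (hxy : hwtPi x = hwtPi y) :
    wtw ω (extendZero S H _ x) = wtw ω (extendZero S H _ y) := by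
  have hsupp_sub (z : ∀ k : {i // lenP i = r ∧ ω i = b}, H k) :
      hsupp (extendZero S H _ z) ⊆ {i | lenP i = r ∧ ω i = b} := by
    rw [hsupp_extendZero]
    rintro _ ⟨k, -, rfl⟩
    exact k.2
  have weight_eq (z : ∀ k : {i // lenP i = r ∧ ω i = b}, H k) :
      totalWeight ω (hsupp (extendZero S H _ z)) = hwtPi z * b := by
    rw [totalWeight_eq_ncard_mul fun i hi => (hsupp_sub z hi).2, hsupp_extendZero,
      Set.ncard_image_of_injective _ Subtype.val_injective, hwtPi]
  refine totalWeight_idl_congr_of_subset_level (r := r) h hω (fun i hi => (hsupp_sub x hi).1)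
    (fun i hi => (hsupp_sub y hi).1) ?_
  rw [weight_eq, weight_eq, hxy]

lemma MEPweight.mepHam (hM : MEPweight S H ω) (hω : ∀ i, 0 < ω i) (h : Hierarchical Ω)
    (hH : ∀ i, ∃ x : H i, x ≠ 0) (r : ℕ) (b : ℝ) :
    MEPHam S (fun i : {i : Ω // lenP i = r ∧ ω i = b} => H i.1) := by
  intro C f hf
  obtain ⟨φ, hφ, hext⟩ := hM.exists_apply_eq hω (extendZero S H _ ∘ₗ C.subtype)
    (extendZero S H _ ∘ₗ f) fun x => wtw_extendZero_eq hω h (hf x)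
  obtain ⟨σ, τ, hlen, hσω, hστ⟩ := exists_perm_of_wtw_eq h hω hH hφ
  let e : Equiv.Perm {i : Ω // lenP i = r ∧ ω i = b} := σ.subtypePerm fun i => by rw [hlen, hσω]
  let τ' (k : {i : Ω // lenP i = r ∧ ω i = b}) : H k ≃ₗ[S] H (e k) := τ k
  obtain ⟨ψ, hψ, hψ_apply⟩ := exists_equiv_apply_perm
    (N := fun i : {i : Ω // lenP i = r ∧ ω i = b} => H i.1) e τ'
  refine ⟨ψ, hψ, fun x => funext fun j => ?_⟩
  obtain ⟨k, rfl⟩ := e.surjective j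
  have hsupp_sub : hsupp (extendZero S H _ x.1) ⊆ {i | lenP i ≤ lenP k.1} := by
    rw [hsupp_extendZero]
    rintro _ ⟨l, -, rfl⟩
    exact (l.2.1.trans k.2.1.symm).le
  calc ψ x.1 (e k) = τ' k (x.1 k) := hψ_apply x.1 k
    _ = φ (extendZero S H _ x.1) (e k) :=
      .trans (congrArg (τ' k) (extendZero_apply x.1 k).symm) (hστ k _ hsupp_sub).symm
    _ = extendZero S H _ (f x) (e k) := congrFun (hext x) (e k)
    _ = f x (e k) := extendZero_apply (f x) (e k)

end HammingNecessity

section Restriction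

variable {S ι : Type*} [Ring S] {H : ι → Type*} [∀ i, AddCommGroup (H i)] [∀ i, Module S (H i)]

variable (S H) in
/-- The restriction of a family to the positions satisfying `p`, as a linear map. -/
def restrictPi (p : ι → Prop) : (∀ i, H i) →ₗ[S] ∀ k : {i // p i}, H k :=
  LinearMap.pi fun k => LinearMap.proj k.1

lemma restrictPi_eq_zero_iff {p : ι → Prop} {α : ∀ i, H i} :
    restrictPi S H p α = 0 ↔ hsupp α ⊆ {i | ¬p i} := by
  rw [hsupp_subset_iff, funext_iff, Subtype.forall]
  exact forall_congr' fun i => by rw [Set.mem_ofPred_eq, not_not]; rfl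

lemma hwtPi_restrictPi (p : ι → Prop) (α : ∀ i, H i) :
    hwtPi (restrictPi S H p α) = (hsupp α ∩ {i | p i}).ncard := by
  rw [hwtPi, ← Set.ncard_image_of_injective _ Subtype.val_injective]
  exact congrArg Set.ncard (Subtype.image_preimage_val {i | p i} (hsupp α) |>.trans
    (Set.inter_comm _ _))

lemma eq_zero_of_hwtPi_eq_hwtPi_zero [Finite ι] {α : ∀ i, H i}
    (hα : hwtPi α = hwtPi (0 : ∀ i, H i)) : α = 0 := by
  have ncard_eq : (hsupp α).ncard = 0 := by
    rw [← Set.ncard_empty ι, ← hsupp_zero (H := H)]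
    exact hα
  have hsupp_eq : hsupp α = ∅ := (Set.ncard_eq_zero (Set.toFinite _)).1 ncard_eq
  exact funext fun i => hsupp_subset_iff.1 hsupp_eq.subset i (Set.notMem_empty i)

lemma MEPHam.exists_apply_eq [Finite ι] (hH : MEPHam S H) {M : Type*} [AddCommGroup M]
    [Module S M] (p q : M →ₗ[S] ∀ i, H i) (hpq : ∀ m, hwtPi (q m) = hwtPi (p m)) :
    ∃ ψ : (∀ i, H i) ≃ₗ[S] ∀ i, H i, (∀ α, hwtPi (ψ α) = hwtPi α) ∧ ∀ m, ψ (p m) = q m :=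
  ExtensionProperty.exists_apply_eq hH (fun _ => eq_zero_of_hwtPi_eq_hwtPi_zero) p q hpq

lemma mepHam_of_isEmpty [IsEmpty ι] : MEPHam S H := fun _ _ _ =>
  ⟨.refl S _, fun _ => rfl, fun _ => Subsingleton.elim _ _⟩

variable {κ : Type*} {p : κ → ι → Prop} {c : ι → κ} (hp : ∀ a i, p a i ↔ c i = a)
include hp

lemma exists_linearMap_restrictPi_eq
    (ψ : ∀ a, (∀ k : {i // p a i}, H k) →ₗ[S] ∀ k : {i // p a i}, H k) :
    ∃ Ψ : (∀ i, H i) →ₗ[S] ∀ i, H i,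
      ∀ α a, restrictPi S H (p a) (Ψ α) = ψ a (restrictPi S H (p a) α) := by
  refine ⟨LinearMap.pi fun i => LinearMap.proj (⟨i, (hp _ _).2 rfl⟩ : {j // p (c i) j}) ∘ₗ
    ψ (c i) ∘ₗ restrictPi S H (p (c i)), fun α a => funext fun ⟨k, hk⟩ => ?_⟩
  obtain rfl := (hp _ _).1 hk
  rfl

lemma eq_of_restrictPi_eq {α β : ∀ i, H i}
    (hαβ : ∀ a, restrictPi S H (p a) α = restrictPi S H (p a) β) : α = β :=
  funext fun i => congrFun (hαβ (c i)) ⟨i, (hp _ _).2 rfl⟩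

lemma exists_linearEquiv_restrictPi_eq
    (ψ : ∀ a, (∀ k : {i // p a i}, H k) ≃ₗ[S] ∀ k : {i // p a i}, H k) :
    ∃ Ψ : (∀ i, H i) ≃ₗ[S] ∀ i, H i,
      ∀ α a, restrictPi S H (p a) (Ψ α) = ψ a (restrictPi S H (p a) α) := by
  obtain ⟨F, hF⟩ := exists_linearMap_restrictPi_eq hp fun a => (ψ a).toLinearMap
  obtain ⟨G, hG⟩ := exists_linearMap_restrictPi_eq hp fun a => (ψ a).symm.toLinearMap
  exact ⟨.ofLinearMap F G
    (LinearMap.ext fun α => eq_of_restrictPi_eq (S := S) hp fun a => by simp [hF, hG])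
    (LinearMap.ext fun α => eq_of_restrictPi_eq (S := S) hp fun a => by simp [hF, hG]), hF⟩

end Restriction

section StrictlyTriangular

variable {S ι : Type*} [Ring S] {H : ι → Type*} [∀ i, AddCommGroup (H i)] [∀ i, Module S (H i)]
  [Finite ι]

lemma isNilpotent_of_strictlyBelow {ℓ : ι → ℕ} {Δ : Module.End S (∀ i, H i)}
    (hΔ : ∀ α, StrictlyBelow ℓ (Δ α) α) : IsNilpotent Δ := by
  obtain ⟨N, hN⟩ := (Set.finite_range ℓ).bddAbove
  have hsupp_pow (n : ℕ) (α : ∀ i, H i) : hsupp ((Δ ^ n) α) ⊆ {i | ℓ i + n ≤ N} := by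
    induction n with
    | zero => exact fun i _ => hN ⟨i, rfl⟩
    | succ n ih =>
      rw [pow_succ', Module.End.mul_apply]
      have hlt := hΔ _ (N - n) fun i hi => Nat.le_sub_of_add_le (ih hi)
      exact fun i hi => by have : ℓ i < N - n := hlt hi; change ℓ i + (n + 1) ≤ N; omega
  refine ⟨N + 1, LinearMap.ext fun α => funext fun i => ?_⟩
  refine hsupp_subset_iff.1 (hsupp_pow (N + 1) α) i fun hi => ?_
  have : ℓ i + (N + 1) ≤ N := hi
  omega

end StrictlyTriangular

section Sufficiency

variable {S Ω : Type*} [Ring S] {H : Ω → Type*} [∀ i, AddCommGroup (H i)] [∀ i, Module S (H i)]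
  [Finite Ω] [PartialOrder Ω] {ω : Ω → ℝ}

lemma CondB.exists_extend_strictlyBelow (hB : CondB S H) (h : Hierarchical Ω)
    {C : Submodule S (∀ i, H i)} {δ : C →ₗ[S] ∀ i, H i}
    (hδ : ∀ x : C, StrictlyBelow lenP (δ x) x) :
    ∃ Δ : Module.End S (∀ i, H i),
      (∀ x : C, Δ x = δ x) ∧ ∀ α, StrictlyBelow lenP (Δ α) α := by
  have coordinate (k : Ω) : ∃ D : (∀ i : {i // lenP k < lenP i}, H i.1) →ₗ[S] H k,
      ∀ x : C, D (restrictPi S H (lenP k < lenP ·) x.1) = δ x k := by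
    obtain ⟨g, hg⟩ := exists_factor_range (p := restrictPi S H (lenP k < lenP ·) ∘ₗ C.subtype)
      (q := .proj k ∘ₗ δ) fun x hx => by
        refine hsupp_subset_iff.1 (hδ x (lenP k) ?_) k (lt_irrefl (lenP k))
        simpa only [not_lt] using (restrictPi_eq_zero_iff (S := S)).1 hx
    obtain ⟨D, hD⟩ := RelInjective.pi (fun i : {i // lenP k < lenP i} => hB k i.1
      (h.le_iff.2 (Or.inr i.2)) fun hki => i.2.ne (congrArg lenP hki)) _ g
    exact ⟨D, fun x => (hD ⟨_, x, rfl⟩).trans (hg x)⟩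
  choose D hD using coordinate
  refine ⟨LinearMap.pi fun k => D k ∘ₗ restrictPi S H _, fun x => funext fun k => hD k x,
    fun α r hα => hsupp_subset_iff.2 fun k hk => ?_⟩
  have restrict_eq_zero : restrictPi S H (lenP k < lenP ·) α = 0 :=
    (restrictPi_eq_zero_iff (S := S)).2 fun i hi => not_lt.2 ((hα hi).trans (not_lt.1 hk))
  exact (congrArg (D k) restrict_eq_zero).trans (map_zero _)

lemma UDP.ncard_inter_class_eq (hU : UDP ω) (h : Hierarchical Ω) {s t : Set Ω} {r : ℕ}
    (hs : s ⊆ {i | lenP i ≤ r}) (ht : t ⊆ {i | lenP i ≤ r})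
    (hst : totalWeight ω (idl s) = totalWeight ω (idl t)) (b : ℝ) :
    (s ∩ {i | lenP i = r ∧ ω i = b}).ncard = (t ∩ {i | lenP i = r ∧ ω i = b}).ncard := by
  have isIdl_idl (s : Set Ω) : IsIdl (idl s) :=
    fun _ _ hab ⟨c, hc, hbc⟩ => ⟨c, hc, hab.trans hbc⟩
  have idl_inter {s : Set Ω} (hs : s ⊆ {i | lenP i ≤ r}) :
      idl s ∩ {i | lenP i = r ∧ ω i = b} = s ∩ {i | lenP i = r ∧ ω i = b} := by
    refine Set.ext fun i => and_congr_left fun hi => ⟨?_, fun hi => subset_idl s hi⟩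
    rintro ⟨j, hj, hij⟩
    rcases h.le_iff.1 hij with rfl | hlt
    · exact hj
    · exact absurd (hs hj) (hi.1 ▸ hlt).not_ge
  obtain ⟨lam, hlam, hωlam⟩ := hU _ _ (isIdl_idl s) (isIdl_idl t) hst
  have class_image : lam '' {i | lenP i = r ∧ ω i = b} = {i | lenP i = r ∧ ω i = b} := by
    ext j
    obtain ⟨i, rfl⟩ := lam.surjective j
    rw [lam.injective.mem_set_image, Set.mem_ofPred_eq, Set.mem_ofPred_eq, lenP_orderIso_apply,
      hωlam]
  rw [← idl_inter hs, ← idl_inter ht, hlam, ← Set.ncard_image_of_injective _ lam.injective,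
    Set.image_inter lam.injective, class_image]

variable (h : Hierarchical Ω) (hω : ∀ i, 0 < ω i)
include h hω

lemma wtw_eq_of_hwtPi_restrictPi_eq {α β : ∀ i, H i}
    (hαβ : ∀ r b, hwtPi (restrictPi S H (fun i => lenP i = r ∧ ω i = b) α) =
      hwtPi (restrictPi S H (fun i => lenP i = r ∧ ω i = b) β)) :
    wtw ω α = wtw ω β := by
  refine (totalWeight_idl_eq_iff h hω).2 fun r hα => ⟨hsupp_subset_iff.2 fun i hi => ?_, ?_⟩
  · have restrict_eq_zero : restrictPi S H (fun j => lenP j = lenP i ∧ ω j = ω i) α = 0 :=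
      restrictPi_eq_zero_iff.2 fun j hj hji => hi (hji.1.symm.trans_le (hα hj))
    exact congrFun (eq_zero_of_hwtPi_eq_hwtPi_zero
      ((hαβ _ _).symm.trans (congrArg hwtPi restrict_eq_zero))) ⟨i, rfl, rfl⟩
  · refine totalWeight_eq_of_fibers ω fun b => ?_
    have hweight (γ : ∀ i, H i) :
        totalWeight ω (hsupp γ ∩ {i | lenP i = r} ∩ ω ⁻¹' {b}) =
          hwtPi (restrictPi S H (fun i => lenP i = r ∧ ω i = b) γ) * b := by
      rw [totalWeight_eq_ncard_mul fun i hi => hi.2, Set.inter_assoc, hwtPi_restrictPi]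
      rfl
    rw [hweight α, hweight β, hαβ]

section WeightPreserving

variable {C : Submodule S (∀ i, H i)} {f : C →ₗ[S] ∀ i, H i}
  (hf : ∀ x : C, wtw ω (f x) = wtw ω (x : ∀ i, H i)) (hU : UDP ω)
include hf hU

lemma exists_hamming_isometry_of_class {r : ℕ} {b : ℝ}
    (hHam : MEPHam S fun k : {i : Ω // lenP i = r ∧ ω i = b} => H k) :
    ∃ ψ : (∀ k : {i : Ω // lenP i = r ∧ ω i = b}, H k) ≃ₗ[S]
        ∀ k : {i : Ω // lenP i = r ∧ ω i = b}, H k,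
      (∀ x, hwtPi (ψ x) = hwtPi x) ∧ ∀ x : C, hsupp x.1 ⊆ {i | lenP i ≤ r} →
        ψ (restrictPi S H _ x) = restrictPi S H _ (f x) := by
  let ρ := restrictPi S H fun i => lenP i = r ∧ ω i = b
  obtain ⟨K, mem_K⟩ : ∃ K : Submodule S C, ∀ x : C, x ∈ K ↔ hsupp x.1 ⊆ {i | lenP i ≤ r} := by
    refine ⟨LinearMap.ker (restrictPi S H (r < lenP ·) ∘ₗ C.subtype), fun x => ?_⟩
    simp only [← not_lt]
    exact restrictPi_eq_zero_iff (S := S) (α := x.1)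
  obtain ⟨ψ, hψ, hext⟩ := hHam.exists_apply_eq (M := K) (ρ ∘ₗ C.subtype ∘ₗ K.subtype)
    (ρ ∘ₗ f ∘ₗ K.subtype) <| by
      rintro ⟨x, hx⟩
      rw [mem_K] at hx
      have hfx := ((totalWeight_idl_eq_iff h hω).1 (hf x).symm r hx).1
      simp only [LinearMap.comp_apply, Submodule.subtype_apply, ρ, hwtPi_restrictPi]
      exact hU.ncard_inter_class_eq h hfx hx (hf x) b
  exact ⟨ψ, hψ, fun x hx => hext ⟨x, (mem_K x).2 hx⟩⟩

lemma exists_isometry_sub_strictlyBelow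
    (hHam : ∀ r b, MEPHam S fun k : {i : Ω // lenP i = r ∧ ω i = b} => H k) :
    ∃ Ψ : (∀ i, H i) ≃ₗ[S] ∀ i, H i, (∀ α, wtw ω (Ψ α) = wtw ω α) ∧
      ∀ x : C, StrictlyBelow lenP (Ψ.symm (f x) - x.1) x.1 := by
  choose ψ hψ hψf using fun r b => exists_hamming_isometry_of_class h hω hf hU (hHam r b)
  obtain ⟨Ψ, hΨ⟩ := exists_linearEquiv_restrictPi_eq
    (p := fun a : ℕ × ℝ => fun i => lenP i = a.1 ∧ ω i = a.2) (c := fun i => (lenP i, ω i))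
    (fun _ _ => Prod.mk_inj.symm) fun a => ψ a.1 a.2
  refine ⟨Ψ, fun α => wtw_eq_of_hwtPi_restrictPi_eq (S := S) h hω fun r b => ?_,
    fun x r hx => hsupp_subset_iff.2 fun k hk => ?_⟩
  · rw [hΨ α (r, b), hψ]
  · have restrict_eq : restrictPi S H (fun i => lenP i = lenP k ∧ ω i = ω k) (Ψ.symm (f x)) =
        restrictPi S H _ x.1 := by
      apply (ψ (lenP k) (ω k)).injective
      rw [← hΨ _ (lenP k, ω k), Ψ.apply_symm_apply, hψf]
      exact fun i hi => (show lenP i ≤ r from hx hi).trans (not_lt.1 hk)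
    exact sub_eq_zero.2 (congrFun restrict_eq ⟨k, rfl, rfl⟩)

end WeightPreserving

lemma mepWeight_of_udp (hB : CondB S H) (hU : UDP ω)
    (hHam : ∀ r b, MEPHam S fun k : {i : Ω // lenP i = r ∧ ω i = b} => H k) :
    MEPweight S H ω := by
  intro C f hf
  obtain ⟨Ψ, hΨ, hbelow⟩ := exists_isometry_sub_strictlyBelow h hω hf hU hHam
  obtain ⟨Δ, hΔ, hΔ_below⟩ := hB.exists_extend_strictlyBelow h
    (δ := Ψ.symm.toLinearMap ∘ₗ f - C.subtype) hbelow
  let Θ : (∀ i, H i) ≃ₗ[S] ∀ i, H i := .ofBijective (1 + Δ) <|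
    (Module.End.isUnit_iff _).1 (isNilpotent_of_strictlyBelow hΔ_below).isUnit_one_add
  have hΘ (α) : wtw ω (Θ α) = wtw ω α :=
    wtw_add_eq_of_strictlyBelow hω h (hΔ_below α)
  have Θ_apply (x : C) : Θ x = Ψ.symm (f x) :=
    (congrArg (x.1 + ·) (hΔ x)).trans (add_sub_cancel x.1 (Ψ.symm (f x)))
  exact ⟨Θ.trans Ψ, fun α => (hΨ _).trans (hΘ α), fun x => by
    rw [LinearEquiv.trans_apply, Θ_apply, Ψ.apply_symm_apply]⟩

end Sufficiency

lemma ne_zero_of_smul_eq_zero_iff {S ι : Type*} [Ring S] {H : ι → Type*}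
    [∀ i, AddCommGroup (H i)] [∀ i, Module S (H i)] {ξ : ∀ i, H i} (hξ : ξ ≠ 0)
    (hann : ∀ k l, ∀ a : S, a • ξ k = 0 ↔ a • ξ l = 0) (i : ι) : ξ i ≠ 0 := fun hi =>
  hξ <| funext fun k => by simpa [hi] using hann i k 1

theorem stmt17 {Ω : Type*} [Fintype Ω] [Nonempty Ω] [PartialOrder Ω]
    {S : Type*} [Ring S] {H : Ω → Type*} [∀ i, AddCommGroup (H i)] [∀ i, Module S (H i)]
    (ω : Ω → ℝ) (hω : ∀ i : Ω, 0 < ω i)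
    (hhier : Hierarchical Ω) (hC : CondC S H) :
    MEPweight S H ω ↔
      CondA S H ∧ CondB S H ∧ CondD S H ω ∧
        ∀ r ∈ Finset.Icc 1 (maxChainCard Ω), ∀ b : ℝ,
          (∃ i : Ω, lenP i = r ∧ ω i = b) →
          MEPHam S (fun i : {i : Ω // lenP i = r ∧ ω i = b} => H i.1) := by
  refine ⟨fun hM => ?_, fun ⟨_, hB, ⟨hU, _⟩, hHam⟩ => mepWeight_of_udp hhier hω hB hU fun r b => ?_⟩
  · obtain ⟨ξ, hξ, hann⟩ := hC
    have hξ_ne := ne_zero_of_smul_eq_zero_iff hξ hann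
    have hH (i : Ω) : ∃ x : H i, x ≠ 0 := ⟨ξ i, hξ_ne i⟩
    exact ⟨hM.condA hω hhier hH, hM.condB hω hhier, ⟨hM.udp hω hhier hξ_ne hann,
      fun _ _ => hM.nonempty_equiv hω hhier hξ_ne hann⟩, fun r _ b _ => hM.mepHam hω hhier hH r b⟩
  · by_cases hne : ∃ i : Ω, lenP i = r ∧ ω i = b
    · obtain ⟨i, rfl, rfl⟩ := hne
      exact hHam _ (Finset.mem_Icc.2 ⟨one_le_lenP i, lenP_le_maxChainCard i⟩) _ ⟨i, rfl, rfl⟩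
    · have : IsEmpty {i : Ω // lenP i = r ∧ ω i = b} := ⟨fun i => hne ⟨i, i.2⟩⟩
      exact mepHam_of_isEmpty
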